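/- arXiv:2208.00917 — 3 statements merged into one kernel-verified Lean document; each statement's English description precedes it below -/
import Mathlib

section
/- Suppose that n is even and that the subgraph G_{>0} is connected, and that J is ferromagnetic. Then there exist continuous functions x_1, …, x_{n/2} : [0,∞) → ℝ such that for every t ≥ 0 one has 0 < x_1(t) < x_2(t) < … < x_{n/2}(t) < π/2 and {x ∈ (0,π/2) : Z_{G,t}(x) = 0} = {x_1(t), …, x_{n/2}(t)}; moreover, setting x_0(0) := 0 and x_{n/2+1}(0) := π/2, for each k ∈ {1, …, n/2} exactly one of the following three cases occurs: (a) x_k(t) = x_k(0) for every t ∈ [0,∞); (b) x_k is strictly decreasing on [0,∞) and x_k(t) ∈ (x_{k−1}(0), x_k(0)) for every t ∈ (0,∞); (c) x_k is strictly increasing on [0,∞) and x_k(t) ∈ (x_k(0), x_{k+1}(0)) for every t ∈ (0,∞). -/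
open scoped Real

noncomputable def spin (b : Bool) : ℝ := if b then 1 else -1

noncomputable def pairProd {V : Type} (σ : V → Bool) (e : Sym2 V) : ℝ :=
  Sym2.lift ⟨fun u v => spin (σ u) * spin (σ v), fun _ _ => mul_comm _ _⟩ e

/-- The Ising partition function `Z_{G,t}(x)` with an extra coupling `t` at the edge
`u₀v₀`, couplings `J` on the edge set `E`, and (complex) external field `i·x`. -/
noncomputable def IsingZ {V : Type} [Fintype V] [DecidableEq V]
    (E : Finset (Sym2 V)) (J : Sym2 V → ℝ) (u₀ v₀ : V) (t x : ℂ) : ℂ :=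
  ∑ σ : V → Bool, Complex.exp
    (t * ((spin (σ u₀) * spin (σ v₀) : ℝ) : ℂ)
      + ((∑ e ∈ E, J e * pairProd σ e : ℝ) : ℂ)
      + Complex.I * x * ((∑ u, spin (σ u) : ℝ) : ℂ))

/-- Exactly one of three propositions holds. -/
def ExactlyOne (A B C : Prop) : Prop :=
  (A ∧ ¬B ∧ ¬C) ∨ (¬A ∧ B ∧ ¬C) ∨ (¬A ∧ ¬B ∧ C)

section LeeYang

/-- A polynomial in `ζ` of degree one without zeros in the closed unit disc has a dominant
constant coefficient. -/
lemma norm_lt_norm_of_forall_add_mul_ne_zero {a b : ℂ}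
    (h : ∀ ζ : ℂ, ‖ζ‖ ≤ 1 → a + b * ζ ≠ 0) : ‖b‖ < ‖a‖ := by
  by_contra! hab
  have ha : a ≠ 0 := by simpa using h 0 (by simp)
  have hb : b ≠ 0 := by
    rintro rfl
    exact ha (by simpa using hab)
  refine h (-a / b) ?_ (by field_simp; ring)
  rw [norm_div, norm_neg]
  exact div_le_one_of_le₀ hab (norm_nonneg b)

lemma norm_add_sq_sub_norm_add_sq (a b c d : ℂ) :
    ‖a + b‖ ^ 2 - ‖c + d‖ ^ 2 = ‖a‖ ^ 2 + ‖b‖ ^ 2 - ‖c‖ ^ 2 - ‖d‖ ^ 2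
      + 2 * ((starRingEnd ℂ) a * b - (starRingEnd ℂ) c * d).re := by
  simp only [Complex.sq_norm, Complex.normSq_apply, Complex.add_re, Complex.add_im,
    Complex.sub_re, Complex.mul_re, Complex.conj_re, Complex.conj_im]
  ring

lemma two_mul_norm_lt_of_forall_norm_lt {a b c d : ℂ}
    (h : ∀ ζ : ℂ, ‖ζ‖ ≤ 1 → ‖c + d * ζ‖ < ‖a + b * ζ‖) :
    2 * ‖(starRingEnd ℂ) a * b - (starRingEnd ℂ) c * d‖
      < ‖a‖ ^ 2 + ‖b‖ ^ 2 - ‖c‖ ^ 2 - ‖d‖ ^ 2 := by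
  set s := (starRingEnd ℂ) a * b - (starRingEnd ℂ) c * d with hs
  obtain ⟨ζ, hζ, hsζ⟩ : ∃ ζ : ℂ, ‖ζ‖ = 1 ∧ s * ζ = -(‖s‖ : ℂ) := by
    by_cases h0 : s = 0
    · exact ⟨1, by simp, by simp [h0]⟩
    · have hn : (‖s‖ : ℂ) ≠ 0 := by simpa using h0
      refine ⟨-(‖s‖ : ℂ) / s, ?_, by field_simp⟩
      simp [h0]
  have hlt := h ζ hζ.le
  have hsq : ‖c + d * ζ‖ ^ 2 < ‖a + b * ζ‖ ^ 2 := by gcongr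
  have hid := norm_add_sq_sub_norm_add_sq a (b * ζ) c (d * ζ)
  have hre : (starRingEnd ℂ) a * (b * ζ) - (starRingEnd ℂ) c * (d * ζ) = -(‖s‖ : ℂ) := by
    rw [← hsζ, hs]; ring
  rw [hre] at hid
  simp only [norm_mul, hζ, mul_one, Complex.neg_re, Complex.ofReal_re] at hid
  linarith

/-- Switching on a ferromagnetic interaction between two spins preserves the absence of zeros in
the closed bidisc. -/
lemma add_mul_add_mul_add_ne_zero {a b c d : ℂ} {q : ℝ} (hq0 : 0 < q) (hq1 : q ≤ 1)
    (h : ∀ ζ ω : ℂ, ‖ζ‖ ≤ 1 → ‖ω‖ ≤ 1 → a + b * ζ + c * ω + d * ζ * ω ≠ 0) :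
    a + q * b + q * c + d ≠ 0 := by
  have h1 := two_mul_norm_lt_of_forall_norm_lt (a := a) (b := b) (c := c) (d := d)
    fun ζ hζ => norm_lt_norm_of_forall_add_mul_ne_zero fun ω hω => by
      convert h ζ ω hζ hω using 1; ring
  have h2 := two_mul_norm_lt_of_forall_norm_lt (a := a) (b := c) (c := b) (d := d)
    fun ω hω => norm_lt_norm_of_forall_add_mul_ne_zero fun ζ hζ => by
      convert h ζ ω hζ hω using 1; ring
  have h2' : 0 < ‖a‖ ^ 2 + ‖c‖ ^ 2 - ‖b‖ ^ 2 - ‖d‖ ^ 2 := lt_of_le_of_lt (by positivity) h2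
  have hid := norm_add_sq_sub_norm_add_sq a (q * b) (q * c) d
  have hre : (starRingEnd ℂ) a * (q * b) - (starRingEnd ℂ) (q * c) * d
      = (q : ℂ) * ((starRingEnd ℂ) a * b - (starRingEnd ℂ) c * d) := by
    simp only [map_mul, Complex.conj_ofReal]; ring
  rw [hre, Complex.re_ofReal_mul] at hid
  have hs := neg_le_of_abs_le
    (Complex.abs_re_le_norm ((starRingEnd ℂ) a * b - (starRingEnd ℂ) c * d))
  simp only [norm_mul, Complex.norm_real, Real.norm_eq_abs, abs_of_pos hq0, mul_pow] at hid
  intro h0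
  have heq : ‖a + q * b‖ = ‖q * c + d‖ := by
    rw [← norm_neg (q * c + d)]; congr 1; linear_combination h0
  rw [heq, sub_self] at hid
  set r := ((starRingEnd ℂ) a * b - (starRingEnd ℂ) c * d).re
  set s := ‖(starRingEnd ℂ) a * b - (starRingEnd ℂ) c * d‖
  have hs0 : 0 ≤ s := norm_nonneg _
  have key : q * (2 * r) > -(q * (‖a‖ ^ 2 + ‖b‖ ^ 2 - ‖c‖ ^ 2 - ‖d‖ ^ 2)) := by
    nlinarith
  nlinarith [mul_nonneg (sub_nonneg.2 hq1) h2'.le,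
    mul_nonneg (mul_nonneg (sub_nonneg.2 hq1) (sub_nonneg.2 hq1)) hs0,
    mul_nonneg (sub_nonneg.2 hq1) hq0.le,
    mul_nonneg (sub_nonneg.2 hq1)
      (show 0 ≤ (‖a‖ ^ 2 - ‖d‖ ^ 2) - q * (‖b‖ ^ 2 - ‖c‖ ^ 2) by nlinarith)]

/-- Multiply the fugacity at `u` by `ζ` and the one at `v` by `ω`. -/
noncomputable def scaleAt {V : Type} [DecidableEq V] (z : V → ℂ) (u v : V) (ζ ω : ℂ) (w : V) : ℂ :=
  z w * (if w = u then ζ else 1) * (if w = v then ω else 1)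

lemma norm_scaleAt_le {V : Type} [DecidableEq V] (z : V → ℂ) (u v : V) {ζ ω : ℂ}
    (hζ : ‖ζ‖ ≤ 1) (hω : ‖ω‖ ≤ 1) (w : V) :
    ‖scaleAt z u v ζ ω w‖ ≤ ‖z w‖ := by
  have h1 : ‖if w = u then ζ else 1‖ ≤ 1 := by split_ifs <;> simp [hζ]
  have h2 : ‖if w = v then ω else 1‖ ≤ 1 := by split_ifs <;> simp [hω]
  rw [scaleAt, norm_mul, norm_mul, mul_assoc]
  exact mul_le_of_le_one_right (norm_nonneg _) (mul_le_one₀ h1 (norm_nonneg _) h2)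

variable {V : Type} [Fintype V] [DecidableEq V]

/-- The sum of `f` over the configurations with prescribed spins `a` at `u` and `b` at `v`. -/
noncomputable def pairSum (f : (V → Bool) → ℂ) (u v : V) (a b : Bool) : ℂ :=
  ∑ σ : V → Bool, if σ u = a ∧ σ v = b then f σ else 0

lemma sum_mul_eq_pairSum (f : (V → Bool) → ℂ) (u v : V) (g : Bool → Bool → ℂ) :
    ∑ σ, f σ * g (σ u) (σ v) =
      pairSum f u v true true * g true true + pairSum f u v false true * g false true
        + pairSum f u v true false * g true false
        + pairSum f u v false false * g false false := by
  simp only [pairSum, Finset.sum_mul, ← Finset.sum_add_distrib]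
  refine Finset.sum_congr rfl fun σ _ => ?_
  cases σ u <;> cases σ v <;> simp

lemma pairSum_const_mul (c : ℂ) (f : (V → Bool) → ℂ) (u v : V) (a b : Bool) :
    pairSum (fun σ => c * f σ) u v a b = c * pairSum f u v a b := by
  simp [pairSum, Finset.mul_sum]

/-- The Boltzmann weight of a spin configuration without external field. -/
noncomputable def isingWeight (E : Finset (Sym2 V)) (J : Sym2 V → ℝ) (σ : V → Bool) : ℝ :=
  Real.exp (∑ e ∈ E, J e * pairProd σ e)

/-- The contribution of `σ` to the Lee–Yang polynomial. -/
noncomputable def leeYangTerm (E : Finset (Sym2 V)) (J : Sym2 V → ℝ) (z : V → ℂ)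
    (σ : V → Bool) : ℂ :=
  isingWeight E J σ * ∏ u, if σ u then 1 else z u

/-- The multiaffine Lee–Yang polynomial in the fugacities `z` of the minus spins. -/
noncomputable def leeYangPoly (E : Finset (Sym2 V)) (J : Sym2 V → ℝ) (z : V → ℂ) : ℂ :=
  ∑ σ, leeYangTerm E J z σ

lemma leeYangTerm_scaleAt (E : Finset (Sym2 V)) (J : Sym2 V → ℝ) (z : V → ℂ) (u v : V) (ζ ω : ℂ)
    (σ : V → Bool) :
    leeYangTerm E J (scaleAt z u v ζ ω) σ =
      leeYangTerm E J z σ * ((if σ u then 1 else ζ) * (if σ v then 1 else ω)) := by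
  have h : ∀ w, (if σ w then 1 else scaleAt z u v ζ ω w) =
      (if σ w then 1 else z w) * (if w = u then (if σ u then 1 else ζ) else 1)
        * (if w = v then (if σ v then 1 else ω) else 1) := by
    intro w
    by_cases hu : w = u <;> by_cases hv : w = v <;> cases hσ : σ w <;>
      simp_all [scaleAt]
  simp only [leeYangTerm, h, Finset.prod_mul_distrib, Finset.prod_ite_eq', Finset.mem_univ, if_true]
  ring

lemma leeYangPoly_scaleAt (E : Finset (Sym2 V)) (J : Sym2 V → ℝ) (z : V → ℂ) (u v : V)
    (ζ ω : ℂ) :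
    leeYangPoly E J (scaleAt z u v ζ ω) =
      pairSum (leeYangTerm E J z) u v true true
        + pairSum (leeYangTerm E J z) u v false true * ζ
        + pairSum (leeYangTerm E J z) u v true false * ω
        + pairSum (leeYangTerm E J z) u v false false * ζ * ω := by
  simp only [leeYangPoly, leeYangTerm_scaleAt]
  rw [sum_mul_eq_pairSum _ u v fun a b => (if a then 1 else ζ) * (if b then 1 else ω)]
  simp [mul_assoc]

lemma leeYangTerm_insert {E : Finset (Sym2 V)} {e : Sym2 V} (he : e ∉ E) (J : Sym2 V → ℝ)
    (z : V → ℂ) (σ : V → Bool) :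
    leeYangTerm (insert e E) J z σ =
      leeYangTerm E J z σ * (Real.exp (J e * pairProd σ e) : ℂ) := by
  simp only [leeYangTerm, isingWeight, Finset.sum_insert he, Real.exp_add]
  push_cast
  ring

/-- The Lee–Yang circle theorem: the Lee–Yang polynomial of a ferromagnet has no zeros in the open
unit polydisc. -/
theorem leeYangPoly_ne_zero (E : Finset (Sym2 V)) (J : Sym2 V → ℝ) (hJ : ∀ e ∈ E, 0 ≤ J e)
    (z : V → ℂ) (hz : ∀ u, ‖z u‖ < 1) : leeYangPoly E J z ≠ 0 := by
  induction E using Finset.induction_on generalizing z with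
  | empty =>
    have h : leeYangPoly ∅ J z = ∏ u, (1 + z u) := by
      have := Finset.prod_univ_sum (fun _ : V => (Finset.univ : Finset Bool))
        (fun u b => if b then (1 : ℂ) else z u)
      simp only [Fintype.piFinset_univ] at this
      simp only [leeYangPoly, leeYangTerm, isingWeight, Finset.sum_empty, Real.exp_zero,
        Complex.ofReal_one, one_mul]
      rw [← this]
      simp
    rw [h, Finset.prod_ne_zero_iff]
    intro u _ h0
    have := hz u
    rw [show z u = -1 by linear_combination h0] at this
    simp at this
  | insert e E he ih =>
    have ih' := ih fun e' he' => hJ e' (Finset.mem_insert_of_mem he')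
    clear ih
    have hJe := hJ e (Finset.mem_insert_self e E)
    induction e using Sym2.ind with | _ u v =>
    set S := pairSum (leeYangTerm E J z) u v with hS
    have hne : S true true + (Real.exp (-2 * J s(u, v)) : ℝ) * S false true
        + (Real.exp (-2 * J s(u, v)) : ℝ) * S true false + S false false ≠ 0 := by
      refine add_mul_add_mul_add_ne_zero (Real.exp_pos _)
        (Real.exp_le_one_iff.2 (by linarith)) fun ζ ω hζ hω => ?_
      rw [hS, ← leeYangPoly_scaleAt]
      exact ih' _ fun w => (norm_scaleAt_le z u v hζ hω w).trans_lt (hz w)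
    have hsum : leeYangPoly (insert s(u, v) E) J z = Real.exp (J s(u, v)) *
        (S true true + (Real.exp (-2 * J s(u, v)) : ℝ) * S false true
          + (Real.exp (-2 * J s(u, v)) : ℝ) * S true false + S false false) := by
      have hexp : (Real.exp (J s(u, v)) : ℂ) * (Real.exp (-2 * J s(u, v)) : ℝ)
          = (Real.exp (-J s(u, v)) : ℝ) := by
        rw [← Complex.ofReal_mul, ← Real.exp_add]; ring_nf
      simp only [leeYangPoly, leeYangTerm_insert he]
      have := sum_mul_eq_pairSum (leeYangTerm E J z) u v
        fun a b => (Real.exp (J s(u, v) * (spin a * spin b)) : ℂ)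
      simp only [pairProd, Sym2.lift_mk]
      rw [this]
      simp only [spin, ← hS, if_true, Bool.false_eq_true, if_false, mul_one, mul_neg,
        neg_neg]
      linear_combination (-S false true - S true false) * hexp
    rw [hsum]
    exact mul_ne_zero (by simp [Complex.exp_ne_zero]) hne

/-- In a ferromagnet, flipping a spin to minus does not increase the modulus of a restricted
Lee–Yang sum, for fugacities in the closed polydisc. -/
lemma norm_pairSum_le (E : Finset (Sym2 V)) (J : Sym2 V → ℝ) (hJ : ∀ e ∈ E, 0 ≤ J e)
    (z : V → ℂ) (hz : ∀ u, ‖z u‖ ≤ 1) (u v : V) :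
    ‖pairSum (leeYangTerm E J z) u v true false‖ ≤
      ‖pairSum (leeYangTerm E J z) u v true true‖ := by
  have hcont : ∀ b, Continuous fun r : ℝ =>
      ‖pairSum (leeYangTerm E J fun w => (r : ℂ) * z w) u v true b‖ := by
    intro b
    simp only [pairSum, leeYangTerm]
    refine (continuous_finsetSum _ fun σ _ => ?_).norm
    split_ifs
    · refine continuous_const.mul (continuous_finsetProd _ fun w _ => ?_)
      split_ifs <;> fun_prop
    · exact continuous_const
  have hlim : ∀ b, Filter.Tendsto (fun r : ℝ =>
      ‖pairSum (leeYangTerm E J fun w => (r : ℂ) * z w) u v true b‖) (nhdsWithin 1 (Set.Iio 1))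
      (nhds ‖pairSum (leeYangTerm E J z) u v true b‖) := by
    intro b
    have := ((hcont b).tendsto 1).mono_left (nhdsWithin_le_nhds (s := Set.Iio 1))
    simpa using this
  refine le_of_tendsto_of_tendsto (hlim false) (hlim true) ?_
  have hpos : ∀ᶠ r : ℝ in nhdsWithin 1 (Set.Iio 1), r ∈ Set.Ioo 0 1 :=
    Ioo_mem_nhdsLT one_pos
  filter_upwards [hpos] with r hr
  refine (norm_lt_norm_of_forall_add_mul_ne_zero fun ω hω => ?_).le
  have h := leeYangPoly_ne_zero E J hJ (scaleAt (fun w => (r : ℂ) * z w) u v 0 ω) fun w => by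
    refine (norm_scaleAt_le _ u v (by simp) hω w).trans_lt ?_
    rw [norm_mul, Complex.norm_real, Real.norm_of_nonneg hr.1.le]
    nlinarith [hz w, hr.1, hr.2, norm_nonneg (z w)]
  simpa [leeYangPoly_scaleAt] using h

/-- For a connected ferromagnet the Lee–Yang polynomial has no zeros in the closed polydisc with
one vanishing coordinate. -/
theorem leeYangPoly_ne_zero_of_connected (E : Finset (Sym2 V)) (J : Sym2 V → ℝ)
    (hJ : ∀ e ∈ E, 0 ≤ J e)
    (hconn : (SimpleGraph.fromEdgeSet {e : Sym2 V | e ∈ E ∧ 0 < J e}).Connected)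
    (z : V → ℂ) (hz : ∀ u, ‖z u‖ ≤ 1) (u : V) (hu : z u = 0) : leeYangPoly E J z ≠ 0 := by
  induction hk : (Finset.univ.filter fun w => z w ≠ 0).card using Nat.strong_induction_on
    generalizing z with | _ k ih =>
  by_cases hall : ∀ w, z w = 0
  · exact leeYangPoly_ne_zero E J hJ z fun w => by simp [hall w]
  push Not at hall
  obtain ⟨w, hw⟩ := hall
  obtain ⟨p⟩ := hconn.preconnected u w
  obtain ⟨⟨⟨a, b⟩, hadj⟩, -, ha, hb⟩ := p.exists_boundary_dart {x | z x = 0} hu hw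
  simp only [Set.mem_ofPred_eq] at ha hb
  simp only [SimpleGraph.fromEdgeSet_adj, Set.mem_ofPred_eq] at hadj
  obtain ⟨⟨hmem, hpos⟩, hab⟩ := hadj
  set S := pairSum (leeYangTerm E J z) a b with hS
  set S' := pairSum (leeYangTerm (E.erase s(a, b)) J z) a b with hS'
  have hterm : ∀ c, S true c = (Real.exp (J s(a, b) * spin c) : ℝ) * S' true c := by
    intro c
    rw [hS', ← pairSum_const_mul, hS, pairSum, pairSum]
    refine Finset.sum_congr rfl fun σ _ => ?_
    split_ifs with h
    · conv_lhs => rw [← Finset.insert_erase hmem, leeYangTerm_insert (Finset.notMem_erase _ _)]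
      simp [pairProd, h.1, h.2, spin, mul_comm]
    · rfl
  have hzero : ∀ c, S false c = 0 := by
    intro c
    rw [hS, pairSum]
    refine Finset.sum_eq_zero fun σ _ => ?_
    split_ifs with h
    · rw [leeYangTerm, Finset.prod_eq_zero (Finset.mem_univ a) (by simp [h.1, ha]), mul_zero]
    · rfl
  have hone : scaleAt z a b 1 1 = z := by ext; simp [scaleAt]
  have hA : S true true ≠ 0 := by
    have hz' : ∀ x, scaleAt z a b 1 0 x = if x = b then 0 else z x := by
      intro x; by_cases hx : x = b <;> simp [scaleAt, hx]
    have := ih _ ?_ (scaleAt z a b 1 0)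
      (fun x => (norm_scaleAt_le z a b (by simp) (by simp) x).trans (hz x))
      (by rw [hz']; simp [hu]) rfl
    · rw [leeYangPoly_scaleAt, ← hS, hzero] at this
      simpa using this
    · rw [← hk]
      refine Finset.card_lt_card ⟨fun x hx => ?_, fun hsub => ?_⟩
      · simp only [Finset.mem_filter, Finset.mem_univ, true_and, hz'] at hx ⊢
        intro h0
        simp [h0] at hx
      · have := hsub (Finset.mem_filter.2 ⟨Finset.mem_univ b, hb⟩)
        simp [hz'] at this
  have hle : ‖S' true false‖ ≤ ‖S' true true‖ :=
    norm_pairSum_le (E.erase s(a, b)) J (fun e he => hJ e (Finset.mem_of_mem_erase he)) z hz a b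
  have hlt : ‖S true false‖ < ‖S true true‖ := by
    have hS'0 : 0 < ‖S' true true‖ := by
      rw [norm_pos_iff]
      intro h0
      exact hA (by rw [hterm, h0, mul_zero])
    rw [hterm, hterm, norm_mul, norm_mul, Complex.norm_real, Complex.norm_real,
      Real.norm_of_nonneg (Real.exp_pos _).le, Real.norm_of_nonneg (Real.exp_pos _).le]
    refine mul_lt_mul_of_lt_of_le_of_nonneg_of_pos (Real.exp_lt_exp.2 ?_) hle
      (Real.exp_pos _).le hS'0
    simp only [spin, Bool.false_eq_true, if_false, if_true]
    linarith
  intro h0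
  rw [← hone, leeYangPoly_scaleAt, ← hS, hzero, hzero] at h0
  have : S true true = -S true false := by linear_combination h0
  rw [this, norm_neg] at hlt
  exact lt_irrefl _ hlt

/-- For a connected ferromagnet, flipping a spin to minus decreases the modulus of a restricted
Lee–Yang sum. -/
lemma norm_pairSum_lt (E : Finset (Sym2 V)) (J : Sym2 V → ℝ) (hJ : ∀ e ∈ E, 0 ≤ J e)
    (hconn : (SimpleGraph.fromEdgeSet {e : Sym2 V | e ∈ E ∧ 0 < J e}).Connected)
    (z : V → ℂ) (hz : ∀ u, ‖z u‖ ≤ 1) (u v : V) :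
    ‖pairSum (leeYangTerm E J z) u v true false‖ <
      ‖pairSum (leeYangTerm E J z) u v true true‖ := by
  refine norm_lt_norm_of_forall_add_mul_ne_zero fun ω hω => ?_
  have h := leeYangPoly_ne_zero_of_connected E J hJ hconn (scaleAt z u v 0 ω)
    (fun w => (norm_scaleAt_le z u v (by simp) hω w).trans (hz w)) u (by simp [scaleAt])
  simpa [leeYangPoly_scaleAt] using h

end LeeYang

section PartitionFunction

variable {V : Type} [Fintype V] [DecidableEq V]

lemma spin_not (b : Bool) : spin (!b) = -spin b := by cases b <;> simp [spin]

/-- The total magnetization. -/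
noncomputable def magnetization {V : Type} [Fintype V] (σ : V → Bool) : ℝ := ∑ u, spin (σ u)

/-- Reversal of all spins. -/
def flipEquiv (V : Type) : (V → Bool) ≃ (V → Bool) := Equiv.piCongrRight fun _ => Equiv.boolNot

lemma flipEquiv_apply {V : Type} (σ : V → Bool) (u : V) : flipEquiv V σ u = !σ u := rfl

lemma magnetization_flipEquiv {V : Type} [Fintype V] (σ : V → Bool) :
    magnetization (flipEquiv V σ) = -magnetization σ := by
  simp [magnetization, flipEquiv_apply, spin_not]

lemma isingWeight_flipEquiv {V : Type} (E : Finset (Sym2 V)) (J : Sym2 V → ℝ) (σ : V → Bool) :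
    isingWeight E J (flipEquiv V σ) = isingWeight E J σ := by
  have h : ∀ e, pairProd (flipEquiv V σ) e = pairProd σ e := by
    intro e
    induction e using Sym2.ind with | _ u v =>
    simp [pairProd, flipEquiv_apply, spin_not]
  simp [isingWeight, h]

/-- The partition function in the external field `i·x`. -/
noncomputable def isingSum (E : Finset (Sym2 V)) (J : Sym2 V → ℝ) (x : ℂ) : ℂ :=
  ∑ σ, (isingWeight E J σ : ℂ) * Complex.exp (Complex.I * x * magnetization σ)

/-- The partition function in the external field `i·x` with `x` real, in manifestly real form. -/
noncomputable def isingCos (E : Finset (Sym2 V)) (J : Sym2 V → ℝ) (x : ℝ) : ℝ :=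
  ∑ σ, isingWeight E J σ * Real.cos (magnetization σ * x)

lemma exp_magnetization {V : Type} [Fintype V] (x : ℂ) (σ : V → Bool) :
    Complex.exp (Complex.I * x * magnetization σ) =
      Complex.exp (Complex.I * x * Fintype.card V) *
        ∏ u, if σ u then 1 else Complex.exp (-2 * Complex.I * x) := by
  have h : ∀ u, Complex.exp (Complex.I * x * spin (σ u)) = Complex.exp (Complex.I * x) *
      if σ u then 1 else Complex.exp (-2 * Complex.I * x) := by
    intro u
    cases σ u
    · simp only [spin, Bool.false_eq_true, if_false, ← Complex.exp_add]
      congr 1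
      push_cast
      ring
    · simp [spin]
  rw [magnetization, Complex.ofReal_sum, Finset.mul_sum, Complex.exp_sum]
  simp only [h, Finset.prod_mul_distrib, Finset.prod_const, Finset.card_univ, ← Complex.exp_nat_mul]
  congr 2
  ring

lemma isingSum_term_eq {V : Type} [Fintype V] (E : Finset (Sym2 V)) (J : Sym2 V → ℝ) (x : ℂ)
    (σ : V → Bool) :
    (isingWeight E J σ : ℂ) * Complex.exp (Complex.I * x * magnetization σ) =
      Complex.exp (Complex.I * x * Fintype.card V) *
        leeYangTerm E J (fun _ => Complex.exp (-2 * Complex.I * x)) σ := by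
  rw [exp_magnetization, leeYangTerm]
  ring

lemma isingSum_eq_leeYangPoly (E : Finset (Sym2 V)) (J : Sym2 V → ℝ) (x : ℂ) :
    isingSum E J x = Complex.exp (Complex.I * x * Fintype.card V) *
      leeYangPoly E J fun _ => Complex.exp (-2 * Complex.I * x) := by
  simp only [isingSum, leeYangPoly, Finset.mul_sum, isingSum_term_eq]

lemma isingSum_neg (E : Finset (Sym2 V)) (J : Sym2 V → ℝ) (x : ℂ) :
    isingSum E J (-x) = isingSum E J x := by
  rw [isingSum, ← Equiv.sum_comp (flipEquiv V)]
  refine Finset.sum_congr rfl fun σ _ => ?_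
  rw [isingWeight_flipEquiv, magnetization_flipEquiv]
  push_cast
  ring_nf

lemma isingSum_eq_cos (E : Finset (Sym2 V)) (J : Sym2 V → ℝ) (x : ℂ) :
    isingSum E J x = ∑ σ, (isingWeight E J σ : ℂ) * Complex.cos (magnetization σ * x) := by
  have h : 2 * isingSum E J x =
      2 * ∑ σ, (isingWeight E J σ : ℂ) * Complex.cos (magnetization σ * x) := by
    rw [two_mul]
    nth_rw 2 [← isingSum_neg]
    rw [isingSum, isingSum, ← Finset.sum_add_distrib, Finset.mul_sum]
    refine Finset.sum_congr rfl fun σ _ => ?_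
    rw [Complex.cos]
    ring_nf
  exact mul_left_cancel₀ two_ne_zero h

lemma isingSum_ofReal (E : Finset (Sym2 V)) (J : Sym2 V → ℝ) (x : ℝ) :
    isingSum E J x = (isingCos E J x : ℂ) := by
  rw [isingSum_eq_cos, isingCos]
  push_cast
  rfl

/-- The zeros of the partition function of a ferromagnet in the field `i·x` are real. -/
lemma im_eq_zero_of_isingSum_eq_zero (E : Finset (Sym2 V)) (J : Sym2 V → ℝ)
    (hJ : ∀ e ∈ E, 0 ≤ J e) (x : ℂ) (hx : isingSum E J x = 0) : x.im = 0 := by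
  have key : ∀ y : ℂ, y.im < 0 → isingSum E J y ≠ 0 := by
    intro y hy
    rw [isingSum_eq_leeYangPoly]
    refine mul_ne_zero (Complex.exp_ne_zero _) (leeYangPoly_ne_zero E J hJ _ fun _ => ?_)
    rw [Complex.norm_exp, Real.exp_lt_one_iff]
    simp
    linarith
  rcases lt_trichotomy x.im 0 with h | h | h
  · exact absurd hx (key x h)
  · exact h
  · exact absurd (by rw [isingSum_neg, hx]) (key (-x) (by simpa using h))

/-- The derivative of the partition function along the field at the single vertex `u`, up to
sign. -/
noncomputable def isingSin (E : Finset (Sym2 V)) (J : Sym2 V → ℝ) (x : ℝ) (u : V) : ℝ :=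
  ∑ σ, spin (σ u) * (isingWeight E J σ * Real.sin (magnetization σ * x))

lemma hasDerivAt_isingCos (E : Finset (Sym2 V)) (J : Sym2 V → ℝ) (x : ℝ) :
    HasDerivAt (isingCos E J) (-∑ u, isingSin E J x u) x := by
  have h : ∀ σ ∈ (Finset.univ : Finset (V → Bool)), HasDerivAt
      (fun y => isingWeight E J σ * Real.cos (magnetization σ * y))
      (isingWeight E J σ * (-Real.sin (magnetization σ * x) * (magnetization σ * 1))) x :=
    fun σ _ => (((hasDerivAt_id x).const_mul (magnetization σ)).cos).const_mul _
  refine (HasDerivAt.fun_sum h).congr_deriv ?_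
  simp only [isingSin]
  rw [Finset.sum_comm, ← Finset.sum_neg_distrib]
  refine Finset.sum_congr rfl fun σ _ => ?_
  rw [← Finset.sum_mul, ← magnetization]
  ring

lemma isingSin_mul_isingSin_pos (E : Finset (Sym2 V)) (J : Sym2 V → ℝ) (hJ : ∀ e ∈ E, 0 ≤ J e)
    (hconn : (SimpleGraph.fromEdgeSet {e : Sym2 V | e ∈ E ∧ 0 < J e}).Connected)
    (x : ℝ) (hx : isingCos E J x = 0) (u v : V) :
    0 < isingSin E J x u * isingSin E J x v := by
  set f : (V → Bool) → ℂ :=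
    fun σ => (isingWeight E J σ : ℂ) * Complex.exp (Complex.I * x * magnetization σ) with hf
  have hlt : ‖pairSum f u v true false‖ < ‖pairSum f u v true true‖ := by
    have := norm_pairSum_lt E J hJ hconn (fun _ => Complex.exp (-2 * Complex.I * x))
      (fun _ => by rw [Complex.norm_exp]; simp) u v
    simp only [hf, isingSum_term_eq, pairSum_const_mul, norm_mul]
    exact mul_lt_mul_of_pos_left this (norm_pos_iff.2 (Complex.exp_ne_zero _))
  have hconj : ∀ a b, pairSum f u v (!a) (!b) = (starRingEnd ℂ) (pairSum f u v a b) := by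
    intro a b
    rw [pairSum, ← Equiv.sum_comp (flipEquiv V), pairSum, map_sum]
    refine Finset.sum_congr rfl fun σ _ => ?_
    simp only [flipEquiv_apply, Bool.not_inj_iff, hf, isingWeight_flipEquiv,
      magnetization_flipEquiv]
    split_ifs
    · rw [map_mul, Complex.conj_ofReal, ← Complex.exp_conj]
      simp
    · simp
  have hff := hconj true true
  have hft := hconj true false
  simp only [Bool.not_true, Bool.not_false] at hff hft
  have hre : ∀ σ, (f σ).im = isingWeight E J σ * Real.sin (magnetization σ * x) := by
    intro σ
    rw [hf, Complex.im_ofReal_mul, show Complex.I * x * magnetization σ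
      = ((magnetization σ * x : ℝ) : ℂ) * Complex.I by push_cast; ring, Complex.exp_ofReal_mul_I_im]
  have hzero : pairSum f u v true true + pairSum f u v false true + pairSum f u v true false
      + pairSum f u v false false = 0 := by
    have h1 := sum_mul_eq_pairSum f u v fun _ _ => 1
    simp only [mul_one] at h1
    rw [← h1, show ∑ σ, f σ = isingSum E J x from rfl, isingSum_ofReal, hx, Complex.ofReal_zero]
  have hsin : ∀ w, isingSin E J x w = (∑ σ, f σ * (spin (σ w) : ℂ)).im := by
    intro w
    rw [isingSin, Complex.im_sum]
    refine Finset.sum_congr rfl fun σ _ => ?_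
    rw [Complex.im_mul_ofReal, hre]
    ring
  rw [hsin, hsin, sum_mul_eq_pairSum f u v fun a _ => (spin a : ℂ),
    sum_mul_eq_pairSum f u v fun _ b => (spin b : ℂ), hff, hft]
  rw [hff, hft] at hzero
  have hzero' := congrArg Complex.re hzero
  have hsq : ‖pairSum f u v true false‖ ^ 2 < ‖pairSum f u v true true‖ ^ 2 := by gcongr
  simp only [Complex.sq_norm, Complex.normSq_apply] at hsq
  simp only [Complex.add_re, Complex.conj_re, Complex.zero_re] at hzero'
  rw [show (pairSum f u v true true).re = -(pairSum f u v true false).re by linarith] at hsq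
  simp [spin]
  nlinarith

/-- The zeros of the partition function of a connected ferromagnet are simple. -/
lemma sum_isingSin_ne_zero (E : Finset (Sym2 V)) (J : Sym2 V → ℝ) (hJ : ∀ e ∈ E, 0 ≤ J e)
    (hconn : (SimpleGraph.fromEdgeSet {e : Sym2 V | e ∈ E ∧ 0 < J e}).Connected)
    (x : ℝ) (hx : isingCos E J x = 0) : ∑ u, isingSin E J x u ≠ 0 := by
  obtain ⟨v⟩ := hconn.nonempty
  intro h0
  have : 0 < ∑ u, isingSin E J x v * isingSin E J x u :=
    Finset.sum_pos (fun u _ => isingSin_mul_isingSin_pos E J hJ hconn x hx v u)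
      ⟨v, Finset.mem_univ v⟩
  rw [← Finset.mul_sum, h0, mul_zero] at this
  exact lt_irrefl _ this

end PartitionFunction

section Zeros

open Polynomial

variable {V : Type} [Fintype V] [DecidableEq V]

/-- Half of the magnetization for a system of `2 * m` spins. -/
def halfMagnetization {V : Type} [Fintype V] (m : ℕ) (σ : V → Bool) : ℤ :=
  (Finset.univ.filter fun u => σ u = true).card - m

lemma magnetization_eq_two_mul {V : Type} [Fintype V] {m : ℕ} (hm : 2 * m = Fintype.card V)
    (σ : V → Bool) : magnetization σ = 2 * (halfMagnetization m σ : ℝ) := by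
  have h : ∀ u, spin (σ u) = 2 * (if σ u = true then 1 else 0) - 1 := by
    intro u
    cases σ u <;> norm_num [spin]
  have hm' : (2 * m : ℝ) = Fintype.card V := by exact_mod_cast hm
  simp only [magnetization, halfMagnetization, h, Finset.sum_sub_distrib, ← Finset.mul_sum,
    Finset.sum_boole]
  push_cast
  simp only [Finset.sum_const, Finset.card_univ, nsmul_eq_mul, mul_one, ← hm']
  ring

lemma natAbs_halfMagnetization_le {V : Type} [Fintype V] {m : ℕ} (hm : 2 * m = Fintype.card V)
    (σ : V → Bool) : (halfMagnetization m σ).natAbs ≤ m := by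
  have h : (Finset.univ.filter fun u => σ u = true).card ≤ Fintype.card V := Finset.card_le_univ _
  unfold halfMagnetization
  omega

/-- The partition function of `2 * m` spins as a polynomial in `cos (2 * x)`. -/
noncomputable def isingChebyshev (E : Finset (Sym2 V)) (J : Sym2 V → ℝ) (m : ℕ) : ℝ[X] :=
  ∑ σ : V → Bool, C (isingWeight E J σ) * Chebyshev.T ℝ (halfMagnetization m σ)

lemma eval_map_isingChebyshev (E : Finset (Sym2 V)) (J : Sym2 V → ℝ) {m : ℕ}
    (hm : 2 * m = Fintype.card V) (x : ℂ) :
    ((isingChebyshev E J m).map (algebraMap ℝ ℂ)).eval (Complex.cos (2 * x)) = isingSum E J x := by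
  rw [isingSum_eq_cos, isingChebyshev, Polynomial.map_sum, eval_finsetSum]
  refine Finset.sum_congr rfl fun σ _ => ?_
  rw [Polynomial.map_mul, map_C, Chebyshev.map_T, eval_mul, eval_C, Chebyshev.T_complex_cos,
    magnetization_eq_two_mul hm]
  push_cast
  simp only [Complex.coe_algebraMap]
  ring_nf

lemma eval_isingChebyshev (E : Finset (Sym2 V)) (J : Sym2 V → ℝ) {m : ℕ}
    (hm : 2 * m = Fintype.card V) (x : ℝ) :
    (isingChebyshev E J m).eval (Real.cos (2 * x)) = isingCos E J x := by
  rw [isingCos, isingChebyshev, eval_finsetSum]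
  refine Finset.sum_congr rfl fun σ _ => ?_
  rw [eval_mul, eval_C, Chebyshev.T_real_cos, magnetization_eq_two_mul hm]
  ring_nf

lemma natDegree_isingChebyshev (E : Finset (Sym2 V)) (J : Sym2 V → ℝ) {m : ℕ}
    (hm : 2 * m = Fintype.card V) : (isingChebyshev E J m).natDegree = m := by
  have hT : ∀ σ : V → Bool, 0 ≤ (Chebyshev.T ℝ (halfMagnetization m σ)).coeff m ∧
      ((halfMagnetization m σ).natAbs = m →
        0 < (Chebyshev.T ℝ (halfMagnetization m σ)).coeff m) := by
    intro σ
    have hdeg := Chebyshev.natDegree_T ℝ (halfMagnetization m σ)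
    rcases (natAbs_halfMagnetization_le hm σ).lt_or_eq with h | h
    · exact ⟨(coeff_eq_zero_of_natDegree_lt (by omega)).ge, fun h' => absurd h' h.ne⟩
    · have hpos : 0 < (Chebyshev.T ℝ (halfMagnetization m σ)).coeff m := by
        have hc := coeff_natDegree (p := Chebyshev.T ℝ (halfMagnetization m σ))
        rw [hdeg, h, Chebyshev.leadingCoeff_T] at hc
        rw [hc]
        positivity
      exact ⟨hpos.le, fun _ => hpos⟩
  refine natDegree_eq_of_le_of_coeff_ne_zero
    (natDegree_sum_le_of_forall_le _ _ fun σ _ => ?_) ?_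
  · refine (natDegree_C_mul_le _ _).trans ?_
    rw [Chebyshev.natDegree_T]
    exact natAbs_halfMagnetization_le hm σ
  · rw [isingChebyshev, finsetSum_coeff]
    simp only [coeff_C_mul]
    refine (Finset.sum_pos' (fun σ _ => mul_nonneg (Real.exp_pos _).le (hT σ).1)
      ⟨fun _ => true, Finset.mem_univ _, mul_pos (Real.exp_pos _) ((hT _).2 ?_)⟩).ne'
    simp [halfMagnetization, ← hm]
    omega

/-- The partition function of a connected ferromagnet on `2 * m` vertices has exactly `m` zeros
`x` in `(0, π / 2)`. -/
theorem ncard_zeros_isingCos (E : Finset (Sym2 V)) (J : Sym2 V → ℝ) (hJ : ∀ e ∈ E, 0 ≤ J e)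
    (hconn : (SimpleGraph.fromEdgeSet {e : Sym2 V | e ∈ E ∧ 0 < J e}).Connected)
    {m : ℕ} (hm : 2 * m = Fintype.card V) :
    {x : ℝ | x ∈ Set.Ioo 0 (π / 2) ∧ isingCos E J x = 0}.ncard = m := by
  set Q := isingChebyshev E J m with hQ
  set Qc := Q.map (algebraMap ℝ ℂ) with hQc
  have hdeg : Qc.natDegree = m := by
    rw [hQc, natDegree_map, hQ, natDegree_isingChebyshev E J hm]
  have hm0 : m ≠ 0 := by
    rintro rfl
    have := hconn.nonempty
    have := Fintype.card_pos (α := V)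
    omega
  have hQc0 : Qc ≠ 0 := by
    rintro h
    rw [h, natDegree_zero] at hdeg
    exact hm0 hdeg.symm
  have hroot : ∀ c : ℂ, Qc.IsRoot c → ∃ x : ℝ, c = (Real.cos (2 * x) : ℝ) ∧
      isingCos E J x = 0 ∧ Q.derivative.eval (Real.cos (2 * x)) ≠ 0 ∧ Real.sin (2 * x) ≠ 0 := by
    intro c hc
    obtain ⟨y, rfl⟩ := Complex.cos_surjective c
    have hy : isingSum E J (y / 2) = 0 := by
      rw [← eval_map_isingChebyshev E J hm, mul_div_cancel₀ y two_ne_zero]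
      exact hc
    have him := im_eq_zero_of_isingSum_eq_zero E J hJ _ hy
    obtain ⟨x, hx⟩ : ∃ x : ℝ, y / 2 = x := ⟨(y / 2).re, by apply Complex.ext <;> simp [him]⟩
    have hyx : y = ((2 * x : ℝ) : ℂ) := by push_cast; rw [← hx]; ring
    rw [hx, isingSum_ofReal, Complex.ofReal_eq_zero] at hy
    have hderiv := hasDerivAt_isingCos E J x
    have hderiv' : HasDerivAt (isingCos E J)
        (Q.derivative.eval (Real.cos (2 * x)) * (-Real.sin (2 * x) * (2 * 1))) x := by
      have h1 := ((hasDerivAt_id x).const_mul (2 : ℝ)).cos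
      have h2 := (Q.hasDerivAt (Real.cos (2 * x))).comp x h1
      refine h2.congr_of_eventuallyEq (Filter.Eventually.of_forall fun y => ?_)
      exact (eval_isingChebyshev E J hm y).symm
    have hne := sum_isingSin_ne_zero E J hJ hconn x hy
    have huniq := hderiv.unique hderiv'
    refine ⟨x, by rw [hyx, Complex.ofReal_cos], hy, fun h => hne ?_, fun h => hne ?_⟩
    · rw [h, zero_mul] at huniq; linarith
    · rw [h] at huniq; linarith
  have hnodup : Qc.roots.Nodup := by
    rw [Multiset.nodup_iff_count_le_one]
    intro c
    rw [count_roots]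
    by_contra! hlt
    obtain ⟨h1, h2⟩ := (one_lt_rootMultiplicity_iff_isRoot hQc0).1 hlt
    obtain ⟨x, rfl, -, hd, -⟩ := hroot c h1
    refine hd ?_
    rw [hQc, derivative_map, IsRoot, ← Complex.coe_algebraMap, eval_map_apply] at h2
    simpa using h2
  have hcard : (Qc.roots.toFinset : Set ℂ).ncard = m := by
    rw [Set.ncard_coe_finset, Multiset.toFinset_card_of_nodup hnodup,
      IsAlgClosed.card_roots_eq_natDegree, hdeg]
  rw [← hcard]
  refine Set.ncard_congr (fun x _ => ((Real.cos (2 * x) : ℝ) : ℂ)) ?_ ?_ ?_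
  · rintro x ⟨-, hx⟩
    simp only [Finset.mem_coe, Multiset.mem_toFinset, mem_roots hQc0, IsRoot]
    have := eval_map_isingChebyshev E J hm x
    rw [isingSum_ofReal, hx, Complex.ofReal_zero] at this
    push_cast
    exact this
  · rintro x y ⟨hx, -⟩ ⟨hy, -⟩ hxy
    have := Real.injOn_cos ⟨by linarith [hx.1], by linarith [hx.2]⟩
      ⟨by linarith [hy.1], by linarith [hy.2]⟩ (Complex.ofReal_injective hxy)
    linarith
  · intro c hc
    simp only [Finset.mem_coe, Multiset.mem_toFinset, mem_roots hQc0] at hc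
    obtain ⟨x, rfl, hx, -, hsin⟩ := hroot c hc
    have hcos : Real.cos (2 * (Real.arccos (Real.cos (2 * x)) / 2)) = Real.cos (2 * x) := by
      rw [mul_div_cancel₀ _ (two_ne_zero' ℝ),
        Real.cos_arccos (Real.neg_one_le_cos _) (Real.cos_le_one _)]
    have hsq := Real.sin_sq_add_cos_sq (2 * x)
    have hsin2 : 0 < Real.sin (2 * x) ^ 2 := by positivity
    refine ⟨Real.arccos (Real.cos (2 * x)) / 2, ⟨⟨?_, ?_⟩, ?_⟩, by rw [hcos]⟩
    · have : 0 < Real.arccos (Real.cos (2 * x)) := Real.arccos_pos.2 (by nlinarith)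
      linarith
    · have : Real.arccos (Real.cos (2 * x)) < π := by
        refine (Real.arccos_le_pi _).lt_of_ne fun h => ?_
        have := Real.arccos_eq_pi.1 h
        nlinarith [Real.neg_one_le_cos (2 * x)]
      linarith
    · rw [← eval_isingChebyshev E J hm, hcos, eval_isingChebyshev E J hm, hx]

end Zeros

section MovingZeros

open Filter Topology Set

lemma eventually_mul_neg_of_hasDerivAt {f : ℝ → ℝ} {d x : ℝ} (hf : HasDerivAt f d x) (hd : d ≠ 0)
    (hx : f x = 0) : ∀ᶠ δ in 𝓝[>] (0 : ℝ), f (x - δ) * f (x + δ) < 0 := by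
  have h1 : Tendsto (fun δ : ℝ => δ⁻¹ * f (x + δ)) (𝓝[>] 0) (𝓝 d) := by
    have := (hasDerivAt_iff_tendsto_slope_zero.1 hf).mono_left
      (nhdsGT_le_nhdsNE 0)
    simpa [hx] using this
  have h2 : Tendsto (fun δ : ℝ => δ⁻¹ * f (x - δ)) (𝓝[>] 0) (𝓝 (-d)) := by
    have hg : HasDerivAt (fun δ : ℝ => f (x - δ)) (-d) 0 := by
      have h := (hasDerivAt_id (0 : ℝ)).const_sub x
      have hf' : HasDerivAt f d (x - id 0) := by simpa using hf
      exact (hf'.comp (0 : ℝ) h).congr_deriv (by ring)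
    have := (hasDerivAt_iff_tendsto_slope_zero.1 hg).mono_left
      (nhdsGT_le_nhdsNE 0)
    simpa [hx] using this
  have hlt : -d * d < 0 := by nlinarith [sq_pos_of_ne_zero hd]
  filter_upwards [(h2.mul h1).eventually_lt_const hlt, self_mem_nhdsWithin] with δ hδ hpos
  have hpos : 0 < δ := hpos
  have heq : δ⁻¹ * f (x - δ) * (δ⁻¹ * f (x + δ)) = δ⁻¹ ^ 2 * (f (x - δ) * f (x + δ)) := by ring
  rw [heq] at hδ
  exact neg_of_mul_neg_right hδ (by positivity)

lemma exists_zero_of_mul_neg {f : ℝ → ℝ} (hf : Continuous f) {a b : ℝ} (hab : a ≤ b)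
    (h : f a * f b < 0) : ∃ y ∈ Ioo a b, f y = 0 := by
  rcases mul_neg_iff.1 h with ⟨ha, hb⟩ | ⟨ha, hb⟩
  · exact intermediate_value_Ioo' hab hf.continuousOn ⟨hb, ha⟩
  · exact intermediate_value_Ioo hab hf.continuousOn ⟨ha, hb⟩

/-- If a family of functions has a constant finite number of zeros in an interval and all of them
are simple, then the ordered zeros depend continuously on the parameter. -/
theorem exists_continuousOn_zeros {T : Set ℝ} {F : ℝ → ℝ → ℝ} {l r : ℝ} {m : ℕ} (hm : m ≠ 0)
    (hFt : ∀ x, Continuous fun t => F t x) (hFx : ∀ t, Continuous (F t))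
    (hcard : ∀ t ∈ T, {x | x ∈ Ioo l r ∧ F t x = 0}.ncard = m)
    (hsimple : ∀ t ∈ T, ∀ x, F t x = 0 → ∃ d ≠ 0, HasDerivAt (F t) d x) :
    ∃ X : Fin m → ℝ → ℝ, (∀ k, ContinuousOn (X k) T) ∧
      (∀ t ∈ T, StrictMono fun k => X k t) ∧
      ∀ t ∈ T, range (fun k => X k t) = {x | x ∈ Ioo l r ∧ F t x = 0} := by
  have hfin : ∀ t ∈ T, ∃ s : Finset ℝ, s.card = m ∧
      (s : Set ℝ) = {x | x ∈ Ioo l r ∧ F t x = 0} := by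
    intro t ht
    have hf : {x | x ∈ Ioo l r ∧ F t x = 0}.Finite :=
      finite_of_ncard_ne_zero (by rw [hcard t ht]; exact hm)
    exact ⟨hf.toFinset, by rw [← ncard_eq_toFinset_card _ hf, hcard t ht], hf.coe_toFinset⟩
  choose! S hScard hS using hfin
  have hmem : ∀ t ∈ T, ∀ x, x ∈ S t ↔ x ∈ Ioo l r ∧ F t x = 0 := by
    intro t ht x
    rw [← Finset.mem_coe, hS t ht]
    rfl
  classical
  let X : Fin m → ℝ → ℝ := fun k t =>
    if ht : t ∈ T then (S t).orderEmbOfFin (hScard t ht) k else 0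
  have hX : ∀ t (ht : t ∈ T) k, X k t = (S t).orderEmbOfFin (hScard t ht) k :=
    fun t ht k => dif_pos ht
  have hmono : ∀ t ∈ T, StrictMono fun k => X k t := by
    intro t ht
    simp only [hX t ht]
    exact ((S t).orderEmbOfFin (hScard t ht)).strictMono
  have hXmem : ∀ t ∈ T, ∀ k, X k t ∈ Ioo l r ∧ F t (X k t) = 0 := by
    intro t ht k
    rw [← hmem t ht, hX t ht]
    exact Finset.orderEmbOfFin_mem _ _ _
  refine ⟨X, fun k t ht => ?_, hmono, fun t ht => ?_⟩
  · rw [ContinuousWithinAt, Metric.tendsto_nhds]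
    intro ε hε
    have hsep : ∀ᶠ δ in 𝓝[>] (0 : ℝ), 0 < δ ∧ δ < ε ∧
        (∀ j, F t (X j t - δ) * F t (X j t + δ) < 0) ∧
        (∀ j, l < X j t - δ) ∧ (∀ j, X j t + δ < r) ∧
        ∀ i j, i < j → X i t + δ < X j t - δ := by
      have hsmall : ∀ a b : ℝ, a < b → ∀ᶠ δ in 𝓝[>] (0 : ℝ), a + δ < b - δ := by
        intro a b hab
        filter_upwards [Ioo_mem_nhdsGT (show (0 : ℝ) < (b - a) / 2 by linarith)] with δ hδ
        linarith [hδ.2]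
      refine Filter.eventually_mem_set.2 self_mem_nhdsWithin |>.and ?_
      refine (Filter.Eventually.and ?_ (Filter.Eventually.and ?_ (Filter.Eventually.and ?_
        (Filter.Eventually.and ?_ ?_))))
      · filter_upwards [Ioo_mem_nhdsGT hε] with δ hδ using hδ.2
      · refine eventually_all.2 fun j => ?_
        obtain ⟨d, hd, hderiv⟩ := hsimple t ht _ (hXmem t ht j).2
        exact eventually_mul_neg_of_hasDerivAt hderiv hd (hXmem t ht j).2
      · refine eventually_all.2 fun j => ?_
        filter_upwards [hsmall _ _ (hXmem t ht j).1.1, self_mem_nhdsWithin] with δ hδ hpos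
        have hpos : 0 < δ := hpos
        linarith
      · refine eventually_all.2 fun j => ?_
        filter_upwards [hsmall _ _ (hXmem t ht j).1.2, self_mem_nhdsWithin] with δ hδ hpos
        have hpos : 0 < δ := hpos
        linarith
      · refine eventually_all.2 fun i => eventually_all.2 fun j => ?_
        by_cases hij : i < j
        · filter_upwards [hsmall _ _ (hmono t ht hij)] with δ hδ _ using hδ
        · exact Eventually.of_forall fun δ h => absurd h hij
    obtain ⟨δ, hδ, hδε, hneg, hl, hr, hsep⟩ := hsep.exists
    have hev : ∀ᶠ s in 𝓝[T] t, ∀ j, F s (X j t - δ) * F s (X j t + δ) < 0 :=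
      eventually_all.2 fun j => nhdsWithin_le_nhds
        ((((hFt _).mul (hFt _)).tendsto t).eventually_lt_const (hneg j))
    filter_upwards [hev, self_mem_nhdsWithin] with s hs hsT
    have hex : ∀ j, ∃ y ∈ Ioo (X j t - δ) (X j t + δ), F s y = 0 := fun j =>
      exists_zero_of_mul_neg (hFx s) (by linarith) (hs j)
    choose y hy hy0 using hex
    have hyX : y = (S s).orderEmbOfFin (hScard s hsT) := by
      refine Finset.orderEmbOfFin_unique _ (fun j => (hmem s hsT _).2 ⟨⟨?_, ?_⟩, hy0 j⟩)
        fun i j hij => ?_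
      · linarith [(hy j).1, hl j]
      · linarith [(hy j).2, hr j]
      · linarith [(hy i).2, (hy j).1, hsep i j hij]
    rw [hX s hsT, ← hyX, Real.dist_eq, abs_lt]
    constructor <;> linarith [(hy k).1, (hy k).2]
  · simp only [hX t ht]
    rw [← hS t ht]
    exact Finset.range_orderEmbOfFin _ _

variable {A B : ℝ → ℝ} {l r : ℝ} {m : ℕ} {X : Fin m → ℝ → ℝ}

lemma eq_zero_of_exp_mul_add_eq_zero {a b s t : ℝ} (hst : s ≠ t)
    (hs : Real.exp s * a + Real.exp (-s) * b = 0) (ht : Real.exp t * a + Real.exp (-t) * b = 0) :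
    a = 0 ∧ b = 0 := by
  have key : ∀ q : ℝ, Real.exp q * a + Real.exp (-q) * b = 0 → Real.exp (2 * q) * a = -b := by
    intro q hq
    have h2 : Real.exp (2 * q) = Real.exp q * Real.exp q := by rw [← Real.exp_add]; ring_nf
    have h1 : Real.exp q * Real.exp (-q) = 1 := by rw [← Real.exp_add]; simp
    rw [h2]
    linear_combination Real.exp q * hq - b * h1
  have h1 := key s hs
  have h2 := key t ht
  have ha : a = 0 := by
    by_contra ha
    have : Real.exp (2 * s) = Real.exp (2 * t) := mul_right_cancel₀ ha (h1.trans h2.symm)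
    exact hst (by linarith [Real.exp_injective this])
  exact ⟨ha, by rw [ha, mul_zero] at h1; linarith⟩

/-- A common zero of `A` and `B` is one of the zeros of `exp t * A + exp (-t) * B`, with an index
independent of `t`. -/
lemma exists_index_of_common_zero (hcont : ∀ k, ContinuousOn (X k) (Ici 0))
    (hmono : ∀ t ∈ Ici (0 : ℝ), StrictMono fun k => X k t)
    (hrange : ∀ t ∈ Ici (0 : ℝ), range (fun k => X k t) =
      {x | x ∈ Ioo l r ∧ Real.exp t * A x + Real.exp (-t) * B x = 0})
    {y : ℝ} (hy : y ∈ Ioo l r) (hA : A y = 0) (hB : B y = 0) :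
    ∃ j, ∀ t ∈ Ici (0 : ℝ), X j t = y := by
  have hex : ∀ t ∈ Ici (0 : ℝ), ∃ j, X j t = y := by
    intro t ht
    have : y ∈ range fun k => X k t := by
      rw [hrange t ht]
      exact ⟨hy, by simp [hA, hB]⟩
    exact this
  have : Nonempty (Fin m) := ⟨(hex 0 self_mem_Ici).choose⟩
  choose! N hN using hex
  have hNcont : ContinuousOn N (Ici 0) := by
    intro t ht
    have hev : ∀ᶠ s in 𝓝[Ici 0] t, ∀ j, j ≠ N t → X j s ≠ y := by
      refine eventually_all.2 fun j => ?_
      by_cases hj : j = N t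
      · exact Eventually.of_forall fun s h => absurd hj h
      · have hne : X j t ≠ y := fun h => hj ((hmono t ht).injective (h.trans (hN t ht).symm))
        filter_upwards [(hcont j t ht).eventually_ne hne] with s hs _ using hs
    refine tendsto_nhds_of_eventually_eq ?_
    filter_upwards [hev, self_mem_nhdsWithin] with s hs hs0
    by_contra hne
    exact hs _ hne (hN s hs0)
  refine ⟨N 0, fun t ht => ?_⟩
  rw [isPreconnected_Ici.constant hNcont self_mem_Ici ht]
  exact hN t ht

lemma ContinuousOn.strictMonoOn_or_strictAntiOn_Ici {f : ℝ → ℝ} {a : ℝ}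
    (hf : ContinuousOn f (Ici a)) (hinj : InjOn f (Ici a)) :
    StrictMonoOn f (Ici a) ∨ StrictAntiOn f (Ici a) := by
  have hsub : ∀ c : ℝ, Icc a c ⊆ Ici a := fun c => Icc_subset_Ici_self
  have hcase : ∀ c, a ≤ c → StrictMonoOn f (Icc a c) ∨ StrictAntiOn f (Icc a c) := fun c hc =>
    (hf.mono (hsub c)).strictMonoOn_of_injOn_Icc' hc (hinj.mono (hsub c))
  have ha : a ∈ Ici a := self_mem_Ici
  rcases hcase (a + 1) (by linarith) with h | h
  · left
    intro x hx y hy hxy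
    have hx : a ≤ x := hx
    have hle : a ≤ max y (a + 1) := (by linarith : a ≤ a + 1).trans (le_max_right _ _)
    have h1 : f a < f (a + 1) := h ⟨le_rfl, by linarith⟩ ⟨by linarith, le_rfl⟩ (by linarith)
    rcases hcase _ hle with h' | h'
    · exact h' ⟨hx, hxy.le.trans (le_max_left _ _)⟩ ⟨hy, le_max_left _ _⟩ hxy
    · exact absurd (h' ⟨le_rfl, hle⟩ ⟨by linarith, le_max_right _ _⟩ (by linarith)) h1.not_gt
  · right
    intro x hx y hy hxy
    have hx : a ≤ x := hx
    have hle : a ≤ max y (a + 1) := (by linarith : a ≤ a + 1).trans (le_max_right _ _)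
    have h1 : f (a + 1) < f a := h ⟨le_rfl, by linarith⟩ ⟨by linarith, le_rfl⟩ (by linarith)
    rcases hcase _ hle with h' | h'
    · exact absurd (h' ⟨le_rfl, hle⟩ ⟨by linarith, le_max_right _ _⟩ (by linarith)) h1.not_gt
    · exact h' ⟨hx, hxy.le.trans (le_max_left _ _)⟩ ⟨hy, le_max_left _ _⟩ hxy

/-- Each zero of `exp t * A + exp (-t) * B` is constant in `t` or strictly monotone, and it never
meets the initial position of another zero. -/
theorem zero_constant_or_strictMonoOn (hcont : ∀ k, ContinuousOn (X k) (Ici 0))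
    (hmono : ∀ t ∈ Ici (0 : ℝ), StrictMono fun k => X k t)
    (hrange : ∀ t ∈ Ici (0 : ℝ), range (fun k => X k t) =
      {x | x ∈ Ioo l r ∧ Real.exp t * A x + Real.exp (-t) * B x = 0}) (k : Fin m) :
    (∀ t, 0 ≤ t → X k t = X k 0) ∨
      ((StrictAntiOn (X k) (Ici 0) ∨ StrictMonoOn (X k) (Ici 0)) ∧
        ∀ j ≠ k, ∀ t, 0 ≤ t → X k t ≠ X j 0) := by
  have hmem : ∀ t, 0 ≤ t → ∀ j, X j t ∈ Ioo l r ∧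
      Real.exp t * A (X j t) + Real.exp (-t) * B (X j t) = 0 := by
    intro t ht j
    have : X j t ∈ range fun k => X k t := ⟨j, rfl⟩
    rwa [hrange t ht] at this
  have hmeet : ∀ i j s t, 0 ≤ s → 0 ≤ t → s ≠ t → X i s = X j t →
      i = j ∧ ∀ q, 0 ≤ q → X i q = X i s := by
    intro i j s t hs ht hst heq
    have hi := (hmem s hs i).2
    have hj := (hmem t ht j).2
    rw [← heq] at hj
    obtain ⟨hA, hB⟩ := eq_zero_of_exp_mul_add_eq_zero hst hi hj
    obtain ⟨p, hp⟩ := exists_index_of_common_zero hcont hmono hrange (hmem s hs i).1 hA hB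
    have hpi : p = i := (hmono s hs).injective (hp s hs)
    have hpj : p = j := (hmono t ht).injective ((hp t ht).trans heq)
    exact ⟨hpi.symm.trans hpj, fun q hq => by rw [← hpi, hp q hq, hp s hs]⟩
  by_cases hinj : InjOn (X k) (Ici 0)
  · refine Or.inr ⟨((hcont k).strictMonoOn_or_strictAntiOn_Ici hinj).symm, ?_⟩
    intro j hj t ht heq
    rcases ht.eq_or_lt with rfl | hpos
    · exact hj ((hmono 0 self_mem_Ici).injective heq.symm)
    · exact hj (hmeet k j t 0 ht le_rfl hpos.ne' heq).1.symm
  · left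
    simp only [InjOn, not_forall] at hinj
    obtain ⟨s, hs, t, ht, heq, hst⟩ := hinj
    have hconst := (hmeet k k s t hs ht hst heq).2
    intro q hq
    rw [hconst q hq, hconst 0 le_rfl]

lemma ContinuousOn.lt_of_forall_ne_Ici {f : ℝ → ℝ} {c : ℝ} (hf : ContinuousOn f (Ici 0))
    (h0 : f 0 < c) (hne : ∀ t, 0 ≤ t → f t ≠ c) {t : ℝ} (ht : 0 ≤ t) : f t < c := by
  by_contra! h
  obtain ⟨s, hs, hsc⟩ := intermediate_value_Icc ht (hf.mono Icc_subset_Ici_self) ⟨h0.le, h⟩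
  exact hne s hs.1 hsc

lemma ContinuousOn.gt_of_forall_ne_Ici {f : ℝ → ℝ} {c : ℝ} (hf : ContinuousOn f (Ici 0))
    (h0 : c < f 0) (hne : ∀ t, 0 ≤ t → f t ≠ c) {t : ℝ} (ht : 0 ≤ t) : c < f t := by
  by_contra! h
  obtain ⟨s, hs, hsc⟩ := intermediate_value_Icc' ht (hf.mono Icc_subset_Ici_self) ⟨h, h0.le⟩
  exact hne s hs.1 hsc

end MovingZeros

section VaryingCoupling

variable {V : Type} [Fintype V] [DecidableEq V]

/-- The couplings `J` with `t` added at the pair `e₀`. -/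
noncomputable def addCoupling {V : Type} [DecidableEq V] (J : Sym2 V → ℝ) (e₀ : Sym2 V) (t : ℝ)
    (e : Sym2 V) : ℝ :=
  J e + if e = e₀ then t else 0

lemma le_addCoupling {V : Type} [DecidableEq V] (J : Sym2 V → ℝ) (e₀ : Sym2 V) {t : ℝ}
    (ht : 0 ≤ t) (e : Sym2 V) : J e ≤ addCoupling J e₀ t e := by
  unfold addCoupling
  split_ifs <;> linarith

lemma isingWeight_addCoupling {V : Type} [DecidableEq V] {E : Finset (Sym2 V)} {e₀ : Sym2 V}
    (he : e₀ ∈ E) (J : Sym2 V → ℝ) (t : ℝ) (σ : V → Bool) :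
    isingWeight E (addCoupling J e₀ t) σ = Real.exp (t * pairProd σ e₀) * isingWeight E J σ := by
  simp [isingWeight, addCoupling, ← Real.exp_add, add_mul, Finset.sum_add_distrib, he, add_comm]

lemma connected_addCoupling {V : Type} [DecidableEq V] {E : Finset (Sym2 V)} {J : Sym2 V → ℝ}
    (hconn : (SimpleGraph.fromEdgeSet {e : Sym2 V | e ∈ E ∧ 0 < J e}).Connected) (e₀ : Sym2 V)
    {t : ℝ} (ht : 0 ≤ t) :
    (SimpleGraph.fromEdgeSet {e : Sym2 V | e ∈ E ∧ 0 < addCoupling J e₀ t e}).Connected :=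
  hconn.mono (SimpleGraph.fromEdgeSet_mono fun e he =>
    ⟨he.1, he.2.trans_le (le_addCoupling J e₀ ht e)⟩)

lemma isingZ_eq_isingSum {E : Finset (Sym2 V)} {u₀ v₀ : V} (hE : s(u₀, v₀) ∈ E)
    (J : Sym2 V → ℝ) (t : ℝ) (x : ℂ) :
    IsingZ E J u₀ v₀ t x = isingSum E (addCoupling J s(u₀, v₀) t) x := by
  simp only [IsingZ, isingSum, isingWeight_addCoupling hE]
  refine Finset.sum_congr rfl fun σ _ => ?_
  rw [isingWeight, magnetization, ← Real.exp_add, Complex.ofReal_exp, ← Complex.exp_add]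
  simp [pairProd]

/-- The part of the partition function where the spins at `u` and `v` agree (`b = true`) or
disagree (`b = false`). -/
noncomputable def isingCosPart (E : Finset (Sym2 V)) (J : Sym2 V → ℝ) (u v : V) (b : Bool)
    (x : ℝ) : ℝ :=
  ∑ σ : V → Bool,
    if (σ u == σ v) = b then isingWeight E J σ * Real.cos (magnetization σ * x) else 0

lemma continuous_isingCosPart (E : Finset (Sym2 V)) (J : Sym2 V → ℝ) (u v : V) (b : Bool) :
    Continuous (isingCosPart E J u v b) := by
  refine continuous_finsetSum _ fun σ _ => ?_
  split_ifs <;> fun_prop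

lemma isingCos_addCoupling {E : Finset (Sym2 V)} {u₀ v₀ : V} (hE : s(u₀, v₀) ∈ E)
    (J : Sym2 V → ℝ) (t x : ℝ) :
    isingCos E (addCoupling J s(u₀, v₀) t) x =
      Real.exp t * isingCosPart E J u₀ v₀ true x
        + Real.exp (-t) * isingCosPart E J u₀ v₀ false x := by
  simp only [isingCos, isingCosPart, isingWeight_addCoupling hE, Finset.mul_sum,
    ← Finset.sum_add_distrib]
  refine Finset.sum_congr rfl fun σ _ => ?_
  cases h₁ : σ u₀ <;> cases h₂ : σ v₀ <;> simp [pairProd, spin, h₁, h₂, mul_assoc]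

end VaryingCoupling

theorem stmt0 {V : Type} [Fintype V] [DecidableEq V]
    (E : Finset (Sym2 V)) (J : Sym2 V → ℝ) (u₀ v₀ : V)
    (hE : s(u₀, v₀) ∈ E)
    (hferro : ∀ e ∈ E, 0 ≤ J e)
    (hconn : (SimpleGraph.fromEdgeSet {e : Sym2 V | e ∈ E ∧ 0 < J e}).Connected)
    (n : ℕ) (hn : n = Fintype.card V) (heven : Even n) :
    ∃ x : ℕ → ℝ → ℝ,
      (∀ k ∈ Finset.Icc 1 (n / 2), ContinuousOn (x k) (Set.Ici 0)) ∧
      (∀ t : ℝ, 0 ≤ t →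
        (∀ k ∈ Finset.Icc 1 (n / 2), 0 < x k t ∧ x k t < π / 2) ∧
        (∀ k, 1 ≤ k → k < n / 2 → x k t < x (k + 1) t) ∧
        {z : ℝ | z ∈ Set.Ioo 0 (π / 2) ∧ IsingZ E J u₀ v₀ t z = 0}
          = (fun k => x k t) '' Set.Icc 1 (n / 2)) ∧
      (∀ k ∈ Finset.Icc 1 (n / 2),
        ExactlyOne
          (∀ t : ℝ, 0 ≤ t → x k t = x k 0)
          (StrictAntiOn (x k) (Set.Ici 0) ∧
            ∀ t : ℝ, 0 < t →
              x k t ∈ Set.Ioo (if k = 1 then 0 else x (k - 1) 0) (x k 0))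
          (StrictMonoOn (x k) (Set.Ici 0) ∧
            ∀ t : ℝ, 0 < t →
              x k t ∈ Set.Ioo (x k 0) (if k = n / 2 then π / 2 else x (k + 1) 0))) := by
  obtain ⟨m, rfl⟩ : ∃ m, n = 2 * m := heven.two_dvd
  have hm0 : m ≠ 0 := by
    rintro rfl
    have := hconn.nonempty
    have := Fintype.card_pos (α := V)
    omega
  set A := isingCosPart E J u₀ v₀ true
  set B := isingCosPart E J u₀ v₀ false
  have hF : ∀ t : ℝ, isingCos E (addCoupling J s(u₀, v₀) t) =
      fun x => Real.exp t * A x + Real.exp (-t) * B x :=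
    fun t => funext fun x => isingCos_addCoupling hE J t x
  have hAc : Continuous A := continuous_isingCosPart E J u₀ v₀ true
  have hBc : Continuous B := continuous_isingCosPart E J u₀ v₀ false
  have hferro' : ∀ t : ℝ, 0 ≤ t → ∀ e ∈ E, 0 ≤ addCoupling J s(u₀, v₀) t e := fun t ht e he =>
    (hferro e he).trans (le_addCoupling J _ ht e)
  obtain ⟨X, hcont, hmono, hrange⟩ := exists_continuousOn_zeros (T := Set.Ici 0)
    (F := fun t x => Real.exp t * A x + Real.exp (-t) * B x) (l := 0) (r := π / 2) hm0
    (fun x => by fun_prop) (fun t => by fun_prop)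
    (fun t ht => by
      have := ncard_zeros_isingCos E _ (hferro' t ht) (connected_addCoupling hconn _ ht) hn
      rwa [hF t] at this)
    (fun t ht x hx => by
      rw [← congrFun (hF t) x] at hx
      have h := hasDerivAt_isingCos E (addCoupling J s(u₀, v₀) t) x
      rw [hF t] at h
      exact ⟨_, neg_ne_zero.2 (sum_isingSin_ne_zero E _ (hferro' t ht)
        (connected_addCoupling hconn _ ht) x hx), h⟩)
  let x : ℕ → ℝ → ℝ := fun k t => if h : k - 1 < m then X ⟨k - 1, h⟩ t else 0
  have hx : ∀ k (h : k - 1 < m), x k = X ⟨k - 1, h⟩ := fun k h => funext fun t => dif_pos h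
  have hlt : ∀ k ∈ Finset.Icc 1 (2 * m / 2), k - 1 < m := by
    intro k hk
    rw [Finset.mem_Icc] at hk
    omega
  have hbounds : ∀ t : ℝ, 0 ≤ t → ∀ j, X j t ∈ Set.Ioo 0 (π / 2) := by
    intro t ht j
    have : X j t ∈ Set.range fun k => X k t := ⟨j, rfl⟩
    rw [hrange t ht] at this
    exact this.1
  refine ⟨x, fun k hk => ?_, fun t ht => ⟨fun k hk => ?_, fun k hk1 hk2 => ?_, ?_⟩, fun k hk => ?_⟩
  · rw [hx k (hlt k hk)]
    exact hcont _
  · rw [hx k (hlt k hk)]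
    exact hbounds t ht _
  · rw [hx k (by omega), hx (k + 1) (by omega)]
    refine hmono t ht (Fin.mk_lt_mk.2 ?_)
    omega
  · have himage : (fun k => x k t) '' Set.Icc 1 (2 * m / 2) = Set.range fun k => X k t := by
      ext y
      constructor
      · rintro ⟨k, hk, rfl⟩
        exact ⟨⟨k - 1, hlt k (Finset.mem_Icc.2 hk)⟩,
          (congrFun (hx k (hlt k (Finset.mem_Icc.2 hk))) t).symm⟩
      · rintro ⟨j, rfl⟩
        refine ⟨j + 1, ⟨by omega, by omega⟩, ?_⟩
        exact congrFun (hx (j + 1) (by omega)) t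
    rw [himage, hrange t ht]
    ext y
    simp only [Set.mem_ofPred_eq]
    rw [isingZ_eq_isingSum hE, isingSum_ofReal, Complex.ofReal_eq_zero, congrFun (hF t) y]
  · have hk' := hlt k hk
    rw [Finset.mem_Icc] at hk
    have h0 : (0 : ℝ) ∈ Set.Ici 0 := Set.self_mem_Ici
    have h1 : (1 : ℝ) ∈ Set.Ici 0 := Set.mem_Ici.2 zero_le_one
    have hanti_ne : StrictAntiOn (x k) (Set.Ici 0) → x k 1 < x k 0 := fun h => h h0 h1 one_pos
    have hmono_ne : StrictMonoOn (x k) (Set.Ici 0) → x k 0 < x k 1 := fun h => h h0 h1 one_pos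
    rcases zero_constant_or_strictMonoOn hcont hmono hrange ⟨k - 1, hk'⟩ with
      hconst | ⟨hanti | hincr, hne⟩
    · rw [← hx k hk'] at hconst
      have h := hconst 1 zero_le_one
      exact Or.inl ⟨hconst, fun h' => (hanti_ne h'.1).ne h, fun h' => (hmono_ne h'.1).ne' h⟩
    · rw [← hx k hk'] at hanti
      have h := hanti_ne hanti
      refine Or.inr (Or.inl ⟨fun h' => h.ne (h' 1 zero_le_one), ⟨hanti, fun t ht => ⟨?_, ?_⟩⟩,
        fun h' => (hmono_ne h'.1).not_gt h⟩)
      · split_ifs with hk1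
        · rw [hx k hk']
          exact (hbounds t ht.le _).1
        · rw [hx k hk', hx (k - 1) (by omega)]
          refine (hcont _).gt_of_forall_ne_Ici (hmono 0 h0 (Fin.mk_lt_mk.2 (by omega)))
            (hne _ ?_) ht.le
          rw [Ne, Fin.mk.injEq]
          omega
      · exact hanti h0 (Set.mem_Ici.2 ht.le) ht
    · rw [← hx k hk'] at hincr
      have h := hmono_ne hincr
      refine Or.inr (Or.inr ⟨fun h' => h.ne' (h' 1 zero_le_one),
        fun h' => (hanti_ne h'.1).not_gt h, ⟨hincr, fun t ht => ⟨?_, ?_⟩⟩⟩)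
      · exact hincr h0 (Set.mem_Ici.2 ht.le) ht
      · split_ifs with hk1
        · rw [hx k hk']
          exact (hbounds t ht.le _).2
        · rw [hx k hk', hx (k + 1) (by omega)]
          refine (hcont _).lt_of_forall_ne_Ici (hmono 0 h0 (Fin.mk_lt_mk.2 (by omega)))
            (hne _ ?_) ht.le
          rw [Ne, Fin.mk.injEq]
          omega
end

section
/- Suppose that n is even, that J is ferromagnetic, and that the subgraph G_{>0} is connected. Let x_1, …, x_{n/2} : [0,∞) → ℝ be continuous functions such that for every t ≥ 0 one has 0 < x_1(t) < … < x_{n/2}(t) < π/2 and {x ∈ (0,π/2) : Z_{G,t}(x) = 0} = {x_1(t), …, x_{n/2}(t)}. Then for any indices k ≠ j, the entire trajectories are disjoint: x_k([0,∞)) ∩ x_j([0,∞)) = ∅. -/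
open scoped Real

theorem spin_mul_spin_eq_one_or (a b : Bool) :
    spin a * spin b = 1 ∨ spin a * spin b = -1 := by
  cases a <;> cases b <;> simp [spin]

/-- The partition function is a linear combination of `cosh t` and `sinh t` with coefficients
independent of `t`. -/
theorem exists_isingZ_eq_cosh_sinh {V : Type} [Fintype V] [DecidableEq V]
    (E : Finset (Sym2 V)) (J : Sym2 V → ℝ) (u₀ v₀ : V) (z : ℂ) :
    ∃ P Q : ℂ, ∀ t : ℂ,
      IsingZ E J u₀ v₀ t z = Complex.cosh t * P + Complex.sinh t * Q := by
  let w : (V → Bool) → ℂ := fun σ => Complex.exp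
    (((∑ e ∈ E, J e * pairProd σ e : ℝ) : ℂ) + Complex.I * z * ((∑ u, spin (σ u) : ℝ) : ℂ))
  refine ⟨∑ σ, w σ, ∑ σ, ((spin (σ u₀) * spin (σ v₀) : ℝ) : ℂ) * w σ, fun t => ?_⟩
  rw [IsingZ, Finset.mul_sum, Finset.mul_sum, ← Finset.sum_add_distrib]
  refine Finset.sum_congr rfl fun σ _ => ?_
  rw [add_assoc, Complex.exp_add]
  change _ * w σ = _
  rcases spin_mul_spin_eq_one_or (σ u₀) (σ v₀) with h | h <;> rw [h] <;> push_cast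
  · rw [mul_one, ← Complex.cosh_add_sinh]
    ring
  · rw [mul_neg_one, ← Complex.cosh_sub_sinh]
    ring

/-- A zero shared by two distinct real couplings is a zero for every coupling. -/
theorem isingZ_eq_zero_of_ne {V : Type} [Fintype V] [DecidableEq V]
    {E : Finset (Sym2 V)} {J : Sym2 V → ℝ} {u₀ v₀ : V} {z : ℂ} {s t : ℝ} (hst : s ≠ t)
    (hs : IsingZ E J u₀ v₀ s z = 0) (ht : IsingZ E J u₀ v₀ t z = 0) (r : ℂ) :
    IsingZ E J u₀ v₀ r z = 0 := by
  obtain ⟨P, Q, h⟩ := exists_isingZ_eq_cosh_sinh E J u₀ v₀ z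
  rw [h] at hs ht ⊢
  have hdet : Complex.sinh (t - s) ≠ 0 := by
    rw [← Complex.ofReal_sub, ← Complex.ofReal_sinh, Complex.ofReal_ne_zero, Real.sinh_ne_zero]
    exact sub_ne_zero.2 hst.symm
  have hP : P = 0 := by
    refine (mul_eq_zero.1 ?_).resolve_left hdet
    rw [Complex.sinh_sub]
    linear_combination Complex.sinh t * hs - Complex.sinh s * ht
  have hQ : Q = 0 := by
    refine (mul_eq_zero.1 ?_).resolve_left hdet
    rw [Complex.sinh_sub]
    linear_combination Complex.cosh s * ht - Complex.cosh t * hs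
  simp [hP, hQ]

/-- If finitely many continuous functions on a preconnected set take pairwise different values at
each point, and at each point one of them takes the value `y`, then only one of them attains
`y`. -/
theorem eq_of_pointwise_injOn_of_covering {ι X Y : Type*} [TopologicalSpace X]
    [TopologicalSpace Y] [T1Space Y] {I : Finset ι} {S : Set X} {f : ι → X → Y} {y : Y}
    (hS : IsPreconnected S) (hcont : ∀ i ∈ I, ContinuousOn (f i) S)
    (hinj : ∀ s ∈ S, ∀ i ∈ I, ∀ j ∈ I, f i s = f j s → i = j)
    (hcover : ∀ s ∈ S, ∃ i ∈ I, f i s = y) {i j : ι} (hi : i ∈ I) (hj : j ∈ I)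
    {s t : X} (hs : s ∈ S) (ht : t ∈ S) (his : f i s = y) (hjt : f j t = y) : i = j := by
  classical
  by_contra hij
  have hclosed : ∀ m ∈ I, ∃ C : Set X, IsClosed C ∧ f m ⁻¹' {y} ∩ S = C ∩ S := fun m hm =>
    continuousOn_iff_isClosed.1 (hcont m hm) {y} isClosed_singleton
  choose! C hC hCS using hclosed
  have mem_C : ∀ m ∈ I, ∀ r ∈ S, r ∈ C m ↔ f m r = y := fun m hm r hr => by
    have := Set.ext_iff.1 (hCS m hm) r
    simpa [hr] using this.symm
  obtain ⟨r, hr, hri, hrD⟩ := isPreconnected_closed_iff.1 hS (C i) (⋃ m ∈ I.erase i, C m)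
    (hC i hi)
    ((I.erase i).finite_toSet.isClosed_biUnion fun m hm => hC m (Finset.mem_of_mem_erase hm))
    (fun r hr => by
      obtain ⟨m, hm, hmr⟩ := hcover r hr
      by_cases hmi : m = i
      · exact Or.inl ((mem_C i hi r hr).2 (hmi ▸ hmr))
      · exact Or.inr (Set.mem_biUnion (Finset.mem_erase.2 ⟨hmi, hm⟩) ((mem_C m hm r hr).2 hmr)))
    ⟨s, hs, (mem_C i hi s hs).2 his⟩
    ⟨t, ht, Set.mem_biUnion (Finset.mem_erase.2 ⟨Ne.symm hij, hj⟩) ((mem_C j hj t ht).2 hjt)⟩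
  obtain ⟨m, hm, hrm⟩ := Set.mem_iUnion₂.1 hrD
  obtain ⟨hmi, hmI⟩ := Finset.mem_erase.1 hm
  exact hmi (hinj r hr m hmI i hi
    (((mem_C m hmI r hr).1 hrm).trans ((mem_C i hi r hr).1 hri).symm))

theorem stmt2 {V : Type} [Fintype V] [DecidableEq V]
    (E : Finset (Sym2 V)) (J : Sym2 V → ℝ) (u₀ v₀ : V)
    (hE : s(u₀, v₀) ∈ E)
    (hferro : ∀ e ∈ E, 0 ≤ J e)
    (hconn : (SimpleGraph.fromEdgeSet {e : Sym2 V | e ∈ E ∧ 0 < J e}).Connected)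
    (n : ℕ) (hn : n = Fintype.card V) (heven : Even n)
    (x : ℕ → ℝ → ℝ)
    (hcont : ∀ k ∈ Finset.Icc 1 (n / 2), ContinuousOn (x k) (Set.Ici 0))
    (hzeros : ∀ t : ℝ, 0 ≤ t →
      (∀ k ∈ Finset.Icc 1 (n / 2), 0 < x k t ∧ x k t < π / 2) ∧
      (∀ k, 1 ≤ k → k < n / 2 → x k t < x (k + 1) t) ∧
      {z : ℝ | z ∈ Set.Ioo 0 (π / 2) ∧ IsingZ E J u₀ v₀ t z = 0}
        = (fun k => x k t) '' Set.Icc 1 (n / 2)) :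
    ∀ k ∈ Finset.Icc 1 (n / 2), ∀ j ∈ Finset.Icc 1 (n / 2), k ≠ j →
      x k '' Set.Ici 0 ∩ x j '' Set.Ici 0 = ∅ := by
  intro k hk j hj hkj
  have hinj : ∀ t ∈ Set.Ici (0 : ℝ), ∀ a ∈ Finset.Icc 1 (n / 2), ∀ b ∈ Finset.Icc 1 (n / 2),
      x a t = x b t → a = b := by
    intro t ht a ha b hb
    have hmono : StrictMonoOn (fun m => x m t) (Set.Icc 1 (n / 2)) :=
      strictMonoOn_of_lt_add_one Set.ordConnected_Icc fun m _ hm hm' =>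
        (hzeros t ht).2.1 m hm.1 hm'.2
    exact hmono.injOn (Finset.mem_Icc.1 ha) (Finset.mem_Icc.1 hb)
  have hzero : ∀ t ∈ Set.Ici (0 : ℝ), ∀ m ∈ Finset.Icc 1 (n / 2),
      IsingZ E J u₀ v₀ t (x m t) = 0 := by
    intro t ht m hm
    exact ((hzeros t ht).2.2.symm.subset ⟨m, Finset.mem_Icc.1 hm, rfl⟩).2
  refine Set.eq_empty_iff_forall_notMem.2 ?_
  rintro y ⟨⟨s, hs, rfl⟩, ⟨t, ht, hst⟩⟩
  obtain rfl | hne := eq_or_ne s t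
  · exact hkj (hinj s hs k hk j hj hst.symm)
  have hy : ∀ r ∈ Set.Ici (0 : ℝ), ∃ m ∈ Finset.Icc 1 (n / 2), x m r = x k s := by
    intro r hr
    have hroot : IsingZ E J u₀ v₀ r (x k s) = 0 :=
      isingZ_eq_zero_of_ne hne (hzero s hs k hk) (hst ▸ hzero t ht j hj) r
    obtain ⟨m, hm, hmr⟩ := (hzeros r hr).2.2.subset ⟨(hzeros s hs).1 k hk, hroot⟩
    exact ⟨m, Finset.mem_Icc.2 hm, hmr⟩
  exact hkj (eq_of_pointwise_injOn_of_covering isPreconnected_Ici hcont hinj hy hk hj hs ht rfl hst)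
end

section
/- For any finite graph G=(V,E), any real pair interactions J, any reals t > 0 and s ≥ 0, and any x ∈ ℂ with Z_{G,t}(x) = 0, one has sinh(t−s) · Z_{G,0}(x) = sinh(t) · Z_{G,s}(x). -/
open scoped Real

theorem sinh_sub_add_sinh_mul_exp_spin (t s : ℂ) (a b : Bool) :
    Complex.sinh (t - s) + Complex.sinh s * Complex.exp (t * ((spin a * spin b : ℝ) : ℂ))
      = Complex.sinh t * Complex.exp (s * ((spin a * spin b : ℝ) : ℂ)) := by
  have h : spin a * spin b = 1 ∨ spin a * spin b = -1 := by
    cases a <;> cases b <;> simp [spin]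
  rcases h with h | h <;> rw [h] <;> push_cast <;>
    simp only [mul_one, mul_neg, ← Complex.cosh_add_sinh, Complex.cosh_neg, Complex.sinh_neg,
      Complex.sinh_sub] <;> ring

/-- Three-term linear relation between the partition functions at couplings `0`, `s` and `t`. -/
theorem sinh_sub_mul_isingZ_zero_add {V : Type} [Fintype V] [DecidableEq V]
    (E : Finset (Sym2 V)) (J : Sym2 V → ℝ) (u₀ v₀ : V) (t s x : ℂ) :
    Complex.sinh (t - s) * IsingZ E J u₀ v₀ 0 x + Complex.sinh s * IsingZ E J u₀ v₀ t x
      = Complex.sinh t * IsingZ E J u₀ v₀ s x := by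
  simp only [IsingZ, Finset.mul_sum, ← Finset.sum_add_distrib]
  refine Finset.sum_congr rfl fun σ _ => ?_
  simp only [Complex.exp_add, zero_mul, Complex.exp_zero, one_mul, ← mul_assoc]
  rw [← sinh_sub_add_sinh_mul_exp_spin t s (σ u₀) (σ v₀)]
  ring

theorem stmt6 {V : Type} [Fintype V] [DecidableEq V]
    (E : Finset (Sym2 V)) (J : Sym2 V → ℝ) (u₀ v₀ : V)
    (hE : s(u₀, v₀) ∈ E)
    (t s : ℝ) (ht : 0 < t) (hs : 0 ≤ s)
    (x : ℂ) (hx : IsingZ E J u₀ v₀ t x = 0) :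
    ((Real.sinh (t - s) : ℝ) : ℂ) * IsingZ E J u₀ v₀ 0 x
      = ((Real.sinh t : ℝ) : ℂ) * IsingZ E J u₀ v₀ s x := by
  have h := sinh_sub_mul_isingZ_zero_add E J u₀ v₀ t s x
  rw [hx, mul_zero, add_zero] at h
  push_cast
  exact h
end
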